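/- For any extension ρ_{AA'BB'} of ρ_{AB} (i.e., Tr_{A'B'} ρ_{AA'BB'} = ρ_{AB}), one has I(AA':BB') ≥ 2E_I(ρ_{AB}) + I(A':B'), and consequently for every n-copy broadcast state ρ^{(n)} of ρ_{AB}, I(A^n:B^n)_{ρ^{(n)}} ≥ 2n·E_I(ρ_{AB}); hence I_b^{(∞)}(ρ) ≥ 2E_I(ρ). -/

import Mathlib

open scoped BigOperators Kronecker ComplexOrder
open Matrix Filter Topology

noncomputable section

/-- Shannon entropy (log base 2) of a finitely supported distribution. -/
def shannon {I : Type} [Fintype I] (p : I → ℝ) : ℝ := -∑ i, p i * Real.logb 2 (p i)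

/-- `p` is a probability distribution. -/
def IsProbDist {I : Type} [Fintype I] (p : I → ℝ) : Prop :=
  (∀ i, 0 ≤ p i) ∧ ∑ i, p i = 1

/-- First marginal of a joint distribution. -/
def margA {I J : Type} [Fintype J] (p : I × J → ℝ) : I → ℝ := fun i => ∑ j, p (i, j)

/-- Second marginal of a joint distribution. -/
def margB {I J : Type} [Fintype I] (p : I × J → ℝ) : J → ℝ := fun j => ∑ i, p (i, j)

/-- Classical mutual information of a joint distribution. -/
def classMI {I J : Type} [Fintype I] [Fintype J] (p : I × J → ℝ) : ℝ :=
  shannon (margA p) + shannon (margB p) - shannon p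

/-- Kullback-Leibler divergence (log base 2). -/
def klDiv {I : Type} [Fintype I] (p q : I → ℝ) : ℝ := ∑ i, p i * Real.logb 2 (p i / q i)

/-- A density operator: positive semidefinite with unit trace. -/
def IsDensity {n : Type} [Fintype n] (ρ : Matrix n n ℂ) : Prop :=
  ρ.PosSemidef ∧ ρ.trace = 1

/-- Von Neumann entropy (log base 2) via the eigenvalues of a Hermitian matrix. -/
def vnEntropy {n : Type} [Fintype n] [DecidableEq n] (ρ : Matrix n n ℂ) : ℝ :=
  if h : ρ.IsHermitian then -∑ i, h.eigenvalues i * Real.logb 2 (h.eigenvalues i) else 0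

/-- Partial trace over the second tensor factor. -/
def ptraceB {A B : Type} [Fintype B] (ρ : Matrix (A × B) (A × B) ℂ) : Matrix A A ℂ :=
  Matrix.of fun a a' => ∑ b, ρ (a, b) (a', b)

/-- Partial trace over the first tensor factor. -/
def ptraceA {A B : Type} [Fintype A] (ρ : Matrix (A × B) (A × B) ℂ) : Matrix B B ℂ :=
  Matrix.of fun b b' => ∑ a, ρ (a, b) (a, b')

/-- Quantum mutual information I(A:B) = S(ρ_A) + S(ρ_B) - S(ρ_{AB}). -/
def mutInfo {A B : Type} [Fintype A] [Fintype B] [DecidableEq A] [DecidableEq B]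
    (ρ : Matrix (A × B) (A × B) ℂ) : ℝ :=
  vnEntropy (ptraceB ρ) + vnEntropy (ptraceA ρ) - vnEntropy ρ

/-- Tensor product of two bipartite states, with the cut (A₁A₂ : B₁B₂). -/
def tens2 {A₁ B₁ A₂ B₂ : Type}
    (ρ : Matrix (A₁ × B₁) (A₁ × B₁) ℂ) (σ : Matrix (A₂ × B₂) (A₂ × B₂) ℂ) :
    Matrix ((A₁ × A₂) × (B₁ × B₂)) ((A₁ × A₂) × (B₁ × B₂)) ℂ :=
  Matrix.of fun x y => ρ (x.1.1, x.2.1) (y.1.1, y.2.1) * σ (x.1.2, x.2.2) (y.1.2, y.2.2)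

/-- n-fold tensor power of a bipartite state, with the A^n : B^n cut. -/
def tpow {A B : Type} (σ : Matrix (A × B) (A × B) ℂ) (n : ℕ) :
    Matrix ((Fin n → A) × (Fin n → B)) ((Fin n → A) × (Fin n → B)) ℂ :=
  Matrix.of fun x y => ∏ i, σ (x.1 i, x.2 i) (y.1 i, y.2 i)

/-- Reduced state of the k-th copy (partial trace over all other copies). -/
def copyMarginal {A B : Type} [Fintype A] [Fintype B] [DecidableEq A] [DecidableEq B] {n : ℕ}
    (ρ : Matrix ((Fin n → A) × (Fin n → B)) ((Fin n → A) × (Fin n → B)) ℂ) (k : Fin n) :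
    Matrix (A × B) (A × B) ℂ :=
  Matrix.of fun x y => ∑ f : Fin n → A, ∑ g : Fin n → B,
    if f k = x.1 ∧ g k = x.2 then
      ρ (f, g) (Function.update f k y.1, Function.update g k y.2) else 0

/-- `τ` is an n-copy broadcast state of `ρ`. -/
def IsBroadcast {A B : Type} [Fintype A] [Fintype B] [DecidableEq A] [DecidableEq B] (n : ℕ)
    (τ : Matrix ((Fin n → A) × (Fin n → B)) ((Fin n → A) × (Fin n → B)) ℂ)
    (ρ : Matrix (A × B) (A × B) ℂ) : Prop :=
  IsDensity τ ∧ ∀ k : Fin n, copyMarginal τ k = ρ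

/-- n-copy broadcast mutual information (I_b)_n. -/
def Ib {A B : Type} [Fintype A] [Fintype B] [DecidableEq A] [DecidableEq B] (n : ℕ)
    (ρ : Matrix (A × B) (A × B) ℂ) : ℝ :=
  sInf {x | ∃ τ, IsBroadcast n τ ρ ∧ x = mutInfo τ}

/-- Partial trace of a state on (A A' : B B') over the primed (ancilla) systems. -/
def ptracePrime {A B A' B' : Type} [Fintype A'] [Fintype B']
    (τ : Matrix ((A × A') × (B × B')) ((A × A') × (B × B')) ℂ) :
    Matrix (A × B) (A × B) ℂ :=
  Matrix.of fun x y => ∑ a', ∑ b', τ ((x.1, a'), (x.2, b')) ((y.1, a'), (y.2, b'))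

/-- Partial trace of a state on (A A' : B B') over the unprimed systems. -/
def ptraceMain {A B A' B' : Type} [Fintype A] [Fintype B]
    (τ : Matrix ((A × A') × (B × B')) ((A × A') × (B × B')) ℂ) :
    Matrix (A' × B') (A' × B') ℂ :=
  Matrix.of fun x y => ∑ a, ∑ b, τ ((a, x.1), (b, x.2)) ((a, y.1), (b, y.2))

/-- Conditional entanglement of mutual information (CEMI). -/
def EI {A B : Type} [Fintype A] [Fintype B] [DecidableEq A] [DecidableEq B]
    (ρ : Matrix (A × B) (A × B) ℂ) : ℝ :=
  (1 / 2) * sInf {x | ∃ (dA dB : ℕ)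
    (τ : Matrix ((A × Fin dA) × (B × Fin dB)) ((A × Fin dA) × (B × Fin dB)) ℂ),
    IsDensity τ ∧ ptracePrime τ = ρ ∧ x = mutInfo τ - mutInfo (ptraceMain τ)}

/-- Classical squashed entanglement, via the ensemble formula. -/
def EsqC {A B : Type} [Fintype A] [Fintype B] [DecidableEq A] [DecidableEq B]
    (ρ : Matrix (A × B) (A × B) ℂ) : ℝ :=
  (1 / 2) * sInf {x | ∃ (m : ℕ) (p : Fin m → ℝ) (σ : Fin m → Matrix (A × B) (A × B) ℂ),
    (∀ k, 0 ≤ p k) ∧ (∑ k, p k = 1) ∧ (∀ k, IsDensity (σ k)) ∧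
    (∑ k, (p k : ℂ) • σ k = ρ) ∧ x = ∑ k, p k * mutInfo (σ k)}

/-- Separability of a bipartite state. -/
def Separable {A B : Type} [Fintype A] [Fintype B]
    (ρ : Matrix (A × B) (A × B) ℂ) : Prop :=
  ∃ (m : ℕ) (p : Fin m → ℝ) (σA : Fin m → Matrix A A ℂ) (σB : Fin m → Matrix B B ℂ),
    (∀ k, 0 ≤ p k) ∧ (∑ k, p k = 1) ∧ (∀ k, IsDensity (σA k) ∧ IsDensity (σB k)) ∧
    ρ = ∑ k, (p k : ℂ) • (σA k ⊗ₖ σB k)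

/-- A finite POVM. -/
def IsPOVM {A ι : Type} [Fintype A] [Fintype ι] [DecidableEq A]
    (M : ι → Matrix A A ℂ) : Prop :=
  (∀ i, (M i).PosSemidef) ∧ ∑ i, M i = 1

/-- Outcome distribution of a local product measurement. -/
def measProb {A B ι κ : Type} [Fintype A] [Fintype B]
    (M : ι → Matrix A A ℂ) (N : κ → Matrix B B ℂ)
    (ρ : Matrix (A × B) (A × B) ℂ) : ι × κ → ℝ :=
  fun x => (((M x.1 ⊗ₖ N x.2) * ρ).trace).re

/-- Completeness condition for a family of Kraus operators. -/
def IsKraus {A A' ι : Type} [Fintype A] [Fintype A'] [Fintype ι] [DecidableEq A]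
    (K : ι → Matrix A' A ℂ) : Prop :=
  ∑ i, (K i)ᴴ * K i = 1

/-- Action of the product channel Λ_A ⊗ Λ_B (given by Kraus operators) on a bipartite state. -/
def localApply {A B A' B' ι κ : Type} [Fintype A] [Fintype B] [Fintype ι] [Fintype κ]
    (K : ι → Matrix A' A ℂ) (L : κ → Matrix B' B ℂ)
    (ρ : Matrix (A × B) (A × B) ℂ) : Matrix (A' × B') (A' × B') ℂ :=
  ∑ i, ∑ j, (K i ⊗ₖ L j) * ρ * (K i ⊗ₖ L j)ᴴ

/-- Measured relative entropy distance to separable states (with optimization over local POVMs). -/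
def measREE {A B : Type} [Fintype A] [Fintype B] [DecidableEq A] [DecidableEq B]
    (ρ : Matrix (A × B) (A × B) ℂ) : ℝ :=
  sInf {x | ∃ σ : Matrix (A × B) (A × B) ℂ, IsDensity σ ∧ Separable σ ∧
    x = sSup {y | ∃ (m m' : ℕ) (M : Fin m → Matrix A A ℂ) (N : Fin m' → Matrix B B ℂ),
      IsPOVM M ∧ IsPOVM N ∧ y = klDiv (measProb M N ρ) (measProb M N σ)}}

/-! Tracing out a system `X` changes the entropy by at most `log |X|`. That it drops by no more
is seen in an eigenbasis of the marginal, by comparison with the diagonal (Schur-Horn) and the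
classical inequality; purification turns this into the opposite bound. Hence
`I(AA':BB') - I(A':B')` is bounded below by a constant depending only on `|A|` and `|B|`, so the
infimum defining `E_I` is a genuine lower bound for every extension.

An `(n + 1)`-copy broadcast state is an extension of its first copy, with an `n`-copy broadcast
state on the ancillas, so the extension inequality iterates. Tensor powers are broadcast states, so
the infimum defining `(I_b)_n` runs over a nonempty set and inherits the bound. -/

section Shannon

variable {X Y : Type} [Fintype X] [Fintype Y]

lemma shannon_eq_sum_negMulLog (p : X → ℝ) :
    shannon p = (∑ i, Real.negMulLog (p i)) / Real.log 2 := by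
  simp only [shannon, Real.negMulLog, Real.logb, neg_mul, Finset.sum_neg_distrib, neg_div,
    Finset.sum_div, mul_div_assoc]

lemma sum_negMulLog_le_sum_negMulLog_mulVec [DecidableEq X] {D : Matrix X X ℝ}
    (hD : D ∈ doublyStochastic ℝ X) {p : X → ℝ} (hp : ∀ i, 0 ≤ p i) :
    ∑ i, Real.negMulLog (p i) ≤ ∑ i, Real.negMulLog ((D *ᵥ p) i) :=
  calc ∑ j, Real.negMulLog (p j)
      = ∑ j, (∑ i, D i j) * Real.negMulLog (p j) := by
        simp only [sum_col_of_mem_doublyStochastic hD, one_mul]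
    _ = ∑ i, ∑ j, D i j • Real.negMulLog (p j) := by
        simp only [Finset.sum_mul, smul_eq_mul]
        exact Finset.sum_comm
    _ ≤ ∑ i, Real.negMulLog ((D *ᵥ p) i) :=
        Finset.sum_le_sum fun i _ => Real.concaveOn_negMulLog.le_map_sum
          (fun _ _ => nonneg_of_mem_doublyStochastic hD) (sum_row_of_mem_doublyStochastic hD i)
          fun j _ => hp j

lemma shannon_le_shannon_mulVec [DecidableEq X] {D : Matrix X X ℝ}
    (hD : D ∈ doublyStochastic ℝ X) {p : X → ℝ} (hp : ∀ i, 0 ≤ p i) :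
    shannon p ≤ shannon (D *ᵥ p) := by
  rw [shannon_eq_sum_negMulLog, shannon_eq_sum_negMulLog]
  exact div_le_div_of_nonneg_right (sum_negMulLog_le_sum_negMulLog_mulVec hD hp)
    (Real.log_nonneg one_le_two)

lemma sum_negMulLog_le_negMulLog_sum_add_mul_log_card {r : X → ℝ} (hr : ∀ x, 0 ≤ r x) :
    ∑ x, Real.negMulLog (r x) ≤
      Real.negMulLog (∑ x, r x) + (∑ x, r x) * Real.log (Fintype.card X) := by
  cases isEmpty_or_nonempty X
  · simp
  have card_pos : (0 : ℝ) < Fintype.card X := Nat.cast_pos.2 Fintype.card_pos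
  have jensen := Real.concaveOn_negMulLog.le_map_sum (t := Finset.univ)
    (w := fun _ : X => (Fintype.card X : ℝ)⁻¹) (p := r) (fun _ _ => by positivity)
    (by simp [card_pos.ne']) (fun x _ => hr x)
  simp only [smul_eq_mul, ← Finset.mul_sum, Real.negMulLog_mul, inv_mul_le_iff₀ card_pos]
    at jensen
  refine jensen.trans_eq ?_
  simp only [Real.negMulLog, Real.log_inv]
  field_simp
  ring

lemma shannon_le_shannon_margB_add_logb {r : X × Y → ℝ} (hr : IsProbDist r) :
    shannon r ≤ shannon (margB r) + Real.logb 2 (Fintype.card X) := by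
  have sum_margB : ∑ y, margB r y = 1 := (Fintype.sum_prod_type_right r).symm.trans hr.2
  have nats : ∑ z, Real.negMulLog (r z) ≤
      ∑ y, Real.negMulLog (margB r y) + Real.log (Fintype.card X) :=
    calc ∑ z, Real.negMulLog (r z)
        = ∑ y, ∑ x, Real.negMulLog (r (x, y)) := Fintype.sum_prod_type_right _
      _ ≤ ∑ y, (Real.negMulLog (margB r y) + margB r y * Real.log (Fintype.card X)) :=
        Finset.sum_le_sum fun y _ =>
          sum_negMulLog_le_negMulLog_sum_add_mul_log_card fun x => hr.1 (x, y)
      _ = _ := by rw [Finset.sum_add_distrib, ← Finset.sum_mul, sum_margB, one_mul]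
  rw [shannon_eq_sum_negMulLog, shannon_eq_sum_negMulLog, Real.logb, ← add_div]
  exact div_le_div_of_nonneg_right nats (Real.log_nonneg one_le_two)

end Shannon

section VonNeumann

variable {m n : Type} [Fintype m] [Fintype n] [DecidableEq m] [DecidableEq n]

lemma vnEntropy_eq_shannon {M : Matrix n n ℂ} (hM : M.IsHermitian) :
    vnEntropy M = shannon hM.eigenvalues :=
  dif_pos hM

lemma vnEntropy_eq_sum_roots_charpoly {M : Matrix n n ℂ} (hM : M.IsHermitian) :
    vnEntropy M = (M.charpoly.roots.map fun z => Real.negMulLog z.re).sum / Real.log 2 := by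
  rw [vnEntropy_eq_shannon hM, shannon_eq_sum_negMulLog, hM.roots_charpoly_eq_eigenvalues,
    Multiset.map_map]
  simp [Function.comp_def]

lemma vnEntropy_submatrix_equiv (e : m ≃ n) (M : Matrix n n ℂ) :
    vnEntropy (M.submatrix e e) = vnEntropy M := by
  by_cases hM : M.IsHermitian
  · rw [vnEntropy_eq_sum_roots_charpoly hM, vnEntropy_eq_sum_roots_charpoly (hM.submatrix e),
      ← charpoly_reindex e.symm M, reindex_apply, Equiv.symm_symm]
  · rw [vnEntropy, vnEntropy, dif_neg hM, dif_neg (mt (isHermitian_submatrix_equiv e).1 hM)]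

-- The characteristic polynomials differ by a power of `X`, and the root `0` carries no entropy.
lemma vnEntropy_mul_comm {P : Matrix m n ℂ} {Q : Matrix n m ℂ}
    (hPQ : (P * Q).IsHermitian) (hQP : (Q * P).IsHermitian) :
    vnEntropy (P * Q) = vnEntropy (Q * P) := by
  have ne_zero (k : ℕ) {p : Polynomial ℂ} (hp : p.Monic) : Polynomial.X ^ k * p ≠ 0 :=
    mul_ne_zero (pow_ne_zero k Polynomial.X_ne_zero) hp.ne_zero
  have roots_eq := congrArg Polynomial.roots (charpoly_mul_comm' P Q)
  rw [Polynomial.roots_mul (ne_zero _ (charpoly_monic _)),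
    Polynomial.roots_mul (ne_zero _ (charpoly_monic _))] at roots_eq
  have sums_eq :=
    congrArg (fun s => (s.map fun z : ℂ => Real.negMulLog z.re).sum) roots_eq
  rw [vnEntropy_eq_sum_roots_charpoly hPQ, vnEntropy_eq_sum_roots_charpoly hQP]
  congr 1
  simpa [Multiset.map_nsmul, Multiset.sum_nsmul] using sums_eq

lemma vnEntropy_conjTranspose_mul_self (W : Matrix m n ℂ) :
    vnEntropy (Wᴴ * W) = vnEntropy (W * Wᴴ) :=
  vnEntropy_mul_comm (isHermitian_conjTranspose_mul_self W) (isHermitian_mul_conjTranspose_self W)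

lemma vnEntropy_conj_unitary {M U : Matrix n n ℂ} (hM : M.IsHermitian)
    (hU : U ∈ unitaryGroup n ℂ) : vnEntropy (Uᴴ * M * U) = vnEntropy M := by
  have cancel : U * (Uᴴ * M) = M := by
    rw [← mul_assoc, ← star_eq_conjTranspose, mem_unitaryGroup_iff.1 hU, one_mul]
  rw [vnEntropy_mul_comm (isHermitian_conjTranspose_mul_mul U hM) (cancel.symm ▸ hM), cancel]

lemma map_normSq_mem_doublyStochastic {U : Matrix n n ℂ} (hU : U ∈ unitaryGroup n ℂ) :
    U.map Complex.normSq ∈ doublyStochastic ℝ n := by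
  refine mem_doublyStochastic_iff_sum.2 ⟨fun _ _ => Complex.normSq_nonneg _, fun i => ?_,
    fun j => ?_⟩
  · have row := congrFun (congrFun (mem_unitaryGroup_iff.1 hU) i) i
    simp only [mul_apply, star_apply, one_apply_eq, Complex.star_def, Complex.mul_conj] at row
    exact_mod_cast row
  · have col := congrFun (congrFun (mem_unitaryGroup_iff'.1 hU) j) j
    simp only [mul_apply, star_apply, one_apply_eq, Complex.star_def,
      ← Complex.normSq_eq_conj_mul_self] at col
    exact_mod_cast col

lemma re_diag_eq_mulVec_eigenvalues {M : Matrix n n ℂ} (hM : M.IsHermitian) (i : n) :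
    (M i i).re =
      ((hM.eigenvectorUnitary : Matrix n n ℂ).map Complex.normSq *ᵥ hM.eigenvalues) i := by
  have diag_eq : M i i = ∑ k, (hM.eigenvectorUnitary : Matrix n n ℂ) i k *
      hM.eigenvalues k * star ((hM.eigenvectorUnitary : Matrix n n ℂ) i k) := by
    conv_lhs => rw [hM.spectral_theorem, Unitary.conjStarAlgAut_apply, mul_apply]
    simp [mul_diagonal, star_apply]
  rw [diag_eq, Complex.re_sum]
  refine Finset.sum_congr rfl fun k _ => ?_
  rw [mul_right_comm, Complex.star_def, Complex.mul_conj, ← Complex.ofReal_mul, Complex.ofReal_re]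
  rfl

lemma vnEntropy_le_shannon_diag {M : Matrix n n ℂ} (hM : M.PosSemidef) :
    vnEntropy M ≤ shannon fun i => (M i i).re := by
  rw [vnEntropy_eq_shannon hM.1, funext (re_diag_eq_mulVec_eigenvalues hM.1)]
  exact shannon_le_shannon_mulVec
    (map_normSq_mem_doublyStochastic hM.1.eigenvectorUnitary.2) hM.eigenvalues_nonneg

end VonNeumann

section Density

variable {n m : Type} [Fintype n] [Fintype m] {M : Matrix n n ℂ}

protected lemma IsDensity.nonempty (hM : IsDensity M) : Nonempty n := by
  by_contra hn
  rw [not_nonempty_iff] at hn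
  simpa using hM.2

protected lemma IsDensity.submatrix_equiv (hM : IsDensity M) (e : m ≃ n) :
    IsDensity (M.submatrix e e) :=
  ⟨hM.1.submatrix e, (Equiv.sum_comp e fun i => M i i).trans hM.2⟩

lemma IsDensity.isProbDist_diag (hM : IsDensity M) : IsProbDist fun i => (M i i).re := by
  refine ⟨fun i => (Complex.nonneg_iff.1 hM.1.diag_nonneg).1, ?_⟩
  rw [← Complex.re_sum]
  exact congrArg Complex.re hM.2

lemma IsDensity.vnEntropy_eq_zero [DecidableEq n] [Subsingleton n] (hM : IsDensity M) :
    vnEntropy M = 0 := by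
  obtain ⟨i⟩ := hM.nonempty
  have eigenvalue_eq_one : hM.1.1.eigenvalues i = 1 := by
    have trace_eq := hM.1.1.trace_eq_sum_eigenvalues
    rw [Fintype.sum_subsingleton _ i] at trace_eq
    exact Complex.ofReal_injective (trace_eq.symm.trans (hM.2.trans Complex.ofReal_one.symm))
  rw [vnEntropy_eq_shannon hM.1.1, shannon, Fintype.sum_subsingleton _ i, eigenvalue_eq_one,
    Real.logb_one, mul_zero, neg_zero]

end Density

section PartialTrace

variable {X Y Z K : Type} [Fintype X] {M : Matrix (X × Y) (X × Y) ℂ}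

lemma ptraceA_eq_sum_submatrix (M : Matrix (X × Y) (X × Y) ℂ) :
    ptraceA M = ∑ x, M.submatrix (Prod.mk x) (Prod.mk x) := by
  ext
  simp [ptraceA, Matrix.sum_apply]

lemma margB_re_diag (M : Matrix (X × Y) (X × Y) ℂ) :
    (margB fun z => (M z z).re) = fun y => (ptraceA M y y).re := by
  ext y
  simp [margB, ptraceA]

/-- The matrix of a tripartite vector on `X × Y × K`, given as a matrix from `K` to `X × Y`, read
as a matrix from `X × K` to `Y`. It lets the purification of a state on `X × Y` be cut as
`Y : X K` instead of `X Y : K`. -/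
def moveFirst (Q : Matrix (X × Y) K ℂ) : Matrix Y (X × K) ℂ :=
  of fun y z => Q (z.1, y) z.2

lemma ptraceA_mul_conjTranspose_self [Fintype K] (Q : Matrix (X × Y) K ℂ) :
    ptraceA (Q * Qᴴ) = moveFirst Q * (moveFirst Q)ᴴ := by
  ext
  simp [ptraceA, moveFirst, mul_apply, Fintype.sum_prod_type]

variable [Fintype Y]

lemma ptraceA_conjTranspose_moveFirst_mul_self (Q : Matrix (X × Y) K ℂ) :
    ptraceA ((moveFirst Q)ᴴ * moveFirst Q) = Qᴴ * Q := by
  ext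
  simp [ptraceA, moveFirst, mul_apply, Fintype.sum_prod_type]

lemma trace_ptraceA (M : Matrix (X × Y) (X × Y) ℂ) : (ptraceA M).trace = M.trace :=
  (Fintype.sum_prod_type_right fun z => M z z).symm

protected lemma IsDensity.ptraceA (hM : IsDensity M) : IsDensity (ptraceA M) := by
  refine ⟨?_, (trace_ptraceA M).trans hM.2⟩
  rw [ptraceA_eq_sum_submatrix]
  exact posSemidef_sum _ fun x _ => hM.1.submatrix _

protected lemma IsDensity.ptraceB (hM : IsDensity M) : IsDensity (ptraceB M) :=
  (hM.submatrix_equiv (Equiv.prodComm Y X)).ptraceA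

variable [DecidableEq X]

lemma ptraceA_conj_one_kronecker (M : Matrix (X × Y) (X × Y) ℂ) (V : Matrix Y Z ℂ) :
    ptraceA (((1 : Matrix X X ℂ) ⊗ₖ V)ᴴ * M * ((1 : Matrix X X ℂ) ⊗ₖ V)) =
      Vᴴ * ptraceA M * V := by
  have block (x : X) :
      (((1 : Matrix X X ℂ) ⊗ₖ V)ᴴ * M * ((1 : Matrix X X ℂ) ⊗ₖ V)).submatrix
        (Prod.mk x) (Prod.mk x) = Vᴴ * M.submatrix (Prod.mk x) (Prod.mk x) * V := by
    ext z z'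
    simp [mul_apply, Fintype.sum_prod_type, one_apply, Finset.sum_ite_irrel, apply_ite star]
  simp only [ptraceA_eq_sum_submatrix, block, Matrix.mul_sum, Matrix.sum_mul]

variable [DecidableEq Y]

-- In an eigenbasis of the marginal, the diagonal of `M` is a distribution whose marginal has
-- exactly the entropy of `ptraceA M`.
lemma IsDensity.vnEntropy_le_vnEntropy_ptraceA_add_logb (hM : IsDensity M) :
    vnEntropy M ≤ vnEntropy (ptraceA M) + Real.logb 2 (Fintype.card X) := by
  have hY : (ptraceA M).IsHermitian := hM.ptraceA.1.1
  set V : Matrix Y Y ℂ := ↑hY.eigenvectorUnitary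
  set W : Matrix (X × Y) (X × Y) ℂ := (1 : Matrix X X ℂ) ⊗ₖ V
  have hW : W ∈ unitaryGroup (X × Y) ℂ :=
    kronecker_mem_unitary (one_mem _) hY.eigenvectorUnitary.2
  have hN : IsDensity (Wᴴ * M * W) := by
    refine ⟨hM.1.conjTranspose_mul_mul_same W, ?_⟩
    rw [trace_mul_cycle, ← star_eq_conjTranspose, mem_unitaryGroup_iff.1 hW, one_mul, hM.2]
  have ptraceA_diagonal : ptraceA (Wᴴ * M * W) = diagonal (fun y => (hY.eigenvalues y : ℂ)) := by
    have diagonalization := hY.conjStarAlgAut_star_eigenvectorUnitary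
    rw [Unitary.conjStarAlgAut_star_apply] at diagonalization
    exact (ptraceA_conj_one_kronecker M V).trans diagonalization
  calc vnEntropy M
      = vnEntropy (Wᴴ * M * W) := (vnEntropy_conj_unitary hM.1.1 hW).symm
    _ ≤ shannon (fun z => ((Wᴴ * M * W) z z).re) := vnEntropy_le_shannon_diag hN.1
    _ ≤ shannon (fun y => (ptraceA (Wᴴ * M * W) y y).re) + Real.logb 2 (Fintype.card X) :=
      margB_re_diag (Wᴴ * M * W) ▸ shannon_le_shannon_margB_add_logb hN.isProbDist_diag
    _ = vnEntropy (ptraceA M) + Real.logb 2 (Fintype.card X) := by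
      rw [vnEntropy_eq_shannon hY, ptraceA_diagonal]
      simp only [diagonal_apply_eq, Complex.ofReal_re]

-- A purification `Q` gives `S(Y) = S(X K) ≤ S(K) + log |X| = S(X Y) + log |X|`.
open scoped MatrixOrder in
lemma IsDensity.vnEntropy_ptraceA_le_vnEntropy_add_logb (hM : IsDensity M) :
    vnEntropy (ptraceA M) ≤ vnEntropy M + Real.logb 2 (Fintype.card X) := by
  obtain ⟨Q, hQ⟩ : ∃ Q : Matrix (X × Y) (X × Y) ℂ, M = Q * Qᴴ :=
    CStarAlgebra.nonneg_iff_eq_mul_star_self.1 hM.1.nonneg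
  set W := moveFirst Q
  have hXK : IsDensity (Wᴴ * W) := by
    refine ⟨posSemidef_conjTranspose_mul_self W, ?_⟩
    rw [← trace_ptraceA, ptraceA_conjTranspose_moveFirst_mul_self, trace_mul_comm, ← hQ, hM.2]
  calc vnEntropy (ptraceA M)
      = vnEntropy (Wᴴ * W) := by
        rw [hQ, ptraceA_mul_conjTranspose_self, vnEntropy_conjTranspose_mul_self]
    _ ≤ vnEntropy (ptraceA (Wᴴ * W)) + Real.logb 2 (Fintype.card X) :=
        hXK.vnEntropy_le_vnEntropy_ptraceA_add_logb
    _ = vnEntropy M + Real.logb 2 (Fintype.card X) := by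
        rw [ptraceA_conjTranspose_moveFirst_mul_self, vnEntropy_conjTranspose_mul_self, ← hQ]

end PartialTrace

section Extension

variable {A B A' B' : Type} (τ : Matrix ((A × A') × (B × B')) ((A × A') × (B × B')) ℂ)

lemma ptraceMain_eq_ptraceA_submatrix [Fintype A] [Fintype B] :
    ptraceMain τ = ptraceA (τ.submatrix (Equiv.prodProdProdComm A B A' B')
      (Equiv.prodProdProdComm A B A' B')) := by
  ext
  simp [ptraceMain, ptraceA, Fintype.sum_prod_type]

lemma ptraceB_ptraceMain [Fintype A] [Fintype B] [Fintype B'] :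
    ptraceB (ptraceMain τ) = ptraceA (ptraceB τ) := by
  ext
  simp only [ptraceMain, ptraceA, ptraceB, of_apply, Fintype.sum_prod_type_right]
  exact Finset.sum_comm

lemma ptraceA_ptraceMain [Fintype A] [Fintype B] [Fintype A'] :
    ptraceA (ptraceMain τ) = ptraceA (ptraceA τ) := by
  ext
  simp only [ptraceMain, ptraceA, of_apply, Fintype.sum_prod_type_right]
  exact (Finset.sum_congr rfl fun _ _ => Finset.sum_comm).trans Finset.sum_comm

variable {τ} [Fintype A] [Fintype B] [Fintype A'] [Fintype B']

protected lemma IsDensity.ptraceMain (hτ : IsDensity τ) : IsDensity (ptraceMain τ) :=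
  ptraceMain_eq_ptraceA_submatrix τ ▸ (hτ.submatrix_equiv _).ptraceA

variable [DecidableEq A] [DecidableEq B] [DecidableEq A'] [DecidableEq B']

lemma mutInfo_submatrix_prodCongr (e : A' ≃ A) (f : B' ≃ B) (M : Matrix (A × B) (A × B) ℂ) :
    mutInfo (M.submatrix (e.prodCongr f) (e.prodCongr f)) = mutInfo M := by
  have hA : ptraceB (M.submatrix (e.prodCongr f) (e.prodCongr f)) = (ptraceB M).submatrix e e := by
    ext a a'
    exact Equiv.sum_comp f fun b => M (e a, b) (e a', b)
  have hB : ptraceA (M.submatrix (e.prodCongr f) (e.prodCongr f)) = (ptraceA M).submatrix f f := by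
    ext b b'
    exact Equiv.sum_comp e fun a => M (a, f b) (a, f b')
  simp only [mutInfo, hA, hB, vnEntropy_submatrix_equiv]

lemma IsDensity.mutInfo_ptraceMain_le (hτ : IsDensity τ) :
    mutInfo (ptraceMain τ) ≤
      mutInfo τ + 2 * (Real.logb 2 (Fintype.card A) + Real.logb 2 (Fintype.card B)) := by
  have hA := hτ.ptraceB.vnEntropy_ptraceA_le_vnEntropy_add_logb
  have hB := hτ.ptraceA.vnEntropy_ptraceA_le_vnEntropy_add_logb
  have hAB := (hτ.submatrix_equiv
    (Equiv.prodProdProdComm A B A' B')).vnEntropy_le_vnEntropy_ptraceA_add_logb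
  obtain ⟨⟨⟨a, -⟩, ⟨b, -⟩⟩⟩ := hτ.nonempty
  have : Nonempty A := ⟨a⟩
  have : Nonempty B := ⟨b⟩
  rw [vnEntropy_submatrix_equiv, ← ptraceMain_eq_ptraceA_submatrix, Fintype.card_prod, Nat.cast_mul,
    Real.logb_mul (Nat.cast_ne_zero.2 Fintype.card_ne_zero)
      (Nat.cast_ne_zero.2 Fintype.card_ne_zero)] at hAB
  rw [mutInfo, mutInfo, ptraceB_ptraceMain, ptraceA_ptraceMain]
  linarith

-- The a priori bound is needed because `sInf` is `0` on a set that is unbounded below.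
lemma IsDensity.two_mul_EI_le_of_fin {dA dB : ℕ}
    {σ : Matrix ((A × Fin dA) × (B × Fin dB)) ((A × Fin dA) × (B × Fin dB)) ℂ}
    (hσ : IsDensity σ) :
    2 * EI (ptracePrime σ) ≤ mutInfo σ - mutInfo (ptraceMain σ) := by
  rw [EI, ← mul_assoc, mul_one_div_cancel two_ne_zero, one_mul]
  refine csInf_le
    ⟨-(2 * (Real.logb 2 (Fintype.card A) + Real.logb 2 (Fintype.card B))), ?_⟩
    ⟨dA, dB, σ, hσ, rfl, rfl⟩
  rintro _ ⟨_, _, ω, hω, -, rfl⟩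
  linarith [hω.mutInfo_ptraceMain_le]

theorem IsDensity.two_mul_EI_add_mutInfo_ptraceMain_le (hτ : IsDensity τ) :
    2 * EI (ptracePrime τ) + mutInfo (ptraceMain τ) ≤ mutInfo τ := by
  let eA := (Fintype.equivFin A').symm
  let eB := (Fintype.equivFin B').symm
  let e := ((Equiv.refl A).prodCongr eA).prodCongr ((Equiv.refl B).prodCongr eB)
  have ptracePrime_eq : ptracePrime (τ.submatrix e e) = ptracePrime τ := by
    ext x y
    exact (Finset.sum_congr rfl fun a _ => Equiv.sum_comp eB fun b =>
      τ ((x.1, eA a), (x.2, b)) ((y.1, eA a), (y.2, b))).trans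
        (Equiv.sum_comp eA fun a => ∑ b, τ ((x.1, a), (x.2, b)) ((y.1, a), (y.2, b)))
  have ptraceMain_eq : ptraceMain (τ.submatrix e e) =
      (ptraceMain τ).submatrix (eA.prodCongr eB) (eA.prodCongr eB) := rfl
  have fin_bound := (hτ.submatrix_equiv e).two_mul_EI_le_of_fin
  rw [ptracePrime_eq, ptraceMain_eq, mutInfo_submatrix_prodCongr, mutInfo_submatrix_prodCongr]
    at fin_bound
  linarith

end Extension

section Broadcast

variable {A B : Type} {n : ℕ}
  (τ : Matrix ((Fin (n + 1) → A) × (Fin (n + 1) → B)) ((Fin (n + 1) → A) × (Fin (n + 1) → B)) ℂ)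

/-- A state of `n + 1` copies of `A × B` with the first copy split off, in the cut
`A A^n : B B^n`: the last `n` copies play the role of the ancillas of an extension. -/
def splitFirst :
    Matrix ((A × (Fin n → A)) × (B × (Fin n → B))) ((A × (Fin n → A)) × (B × (Fin n → B))) ℂ :=
  τ.submatrix ((Fin.consEquiv fun _ => A).prodCongr (Fin.consEquiv fun _ => B))
    ((Fin.consEquiv fun _ => A).prodCongr (Fin.consEquiv fun _ => B))

variable [Fintype A] [Fintype B]

lemma sum_sum_eq_sum_sum_cons {R : Type*} [AddCommMonoid R]
    (F : (Fin (n + 1) → A) → (Fin (n + 1) → B) → R) :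
    ∑ f, ∑ g, F f g = ∑ f, ∑ g, ∑ a, ∑ b, F (Fin.cons a f) (Fin.cons b g) := by
  simp only [← (Fin.consEquiv fun _ => A).sum_comp, ← (Fin.consEquiv fun _ => B).sum_comp,
    Fintype.sum_prod_type_right]
  exact Finset.sum_congr rfl fun _ _ => Finset.sum_comm

variable [DecidableEq A] [DecidableEq B] {ρ : Matrix (A × B) (A × B) ℂ}

lemma ptracePrime_splitFirst : ptracePrime (splitFirst τ) = copyMarginal τ 0 := by
  ext x y
  simp only [copyMarginal, of_apply, sum_sum_eq_sum_sum_cons]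
  simp [ptracePrime, splitFirst, Fin.consEquiv, ite_and, Finset.sum_ite_irrel]

lemma copyMarginal_ptraceMain_splitFirst (k : Fin n) :
    copyMarginal (ptraceMain (splitFirst τ)) k = copyMarginal τ k.succ := by
  ext x y
  simp only [copyMarginal, of_apply, sum_sum_eq_sum_sum_cons (n := n)]
  simp [ptraceMain, splitFirst, Fin.consEquiv, Finset.sum_ite_irrel, Fin.cons_update]

lemma mutInfo_splitFirst : mutInfo (splitFirst τ) = mutInfo τ :=
  mutInfo_submatrix_prodCongr _ _ τ

variable {τ}

lemma IsBroadcast.ptraceMain_splitFirst (hτ : IsBroadcast (n + 1) τ ρ) :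
    IsBroadcast n (ptraceMain (splitFirst τ)) ρ :=
  ⟨(hτ.1.submatrix_equiv _).ptraceMain, fun k =>
    (copyMarginal_ptraceMain_splitFirst τ k).trans (hτ.2 k.succ)⟩

lemma IsDensity.mutInfo_eq_zero [Subsingleton A] [Subsingleton B] (hρ : IsDensity ρ) :
    mutInfo ρ = 0 := by
  rw [mutInfo, hρ.vnEntropy_eq_zero, hρ.ptraceA.vnEntropy_eq_zero, hρ.ptraceB.vnEntropy_eq_zero]
  norm_num

theorem IsBroadcast.two_mul_EI_le_mutInfo
    {σ : Matrix ((Fin n → A) × (Fin n → B)) ((Fin n → A) × (Fin n → B)) ℂ}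
    (hσ : IsBroadcast n σ ρ) : 2 * n * EI ρ ≤ mutInfo σ := by
  induction n with
  | zero => simp [hσ.1.mutInfo_eq_zero]
  | succ n ih =>
    have first_copy : 2 * EI (ptracePrime (splitFirst σ)) + mutInfo (ptraceMain (splitFirst σ)) ≤
        mutInfo (splitFirst σ) :=
      (hσ.1.submatrix_equiv _).two_mul_EI_add_mutInfo_ptraceMain_le
    rw [ptracePrime_splitFirst, hσ.2 0, mutInfo_splitFirst] at first_copy
    have other_copies := ih hσ.ptraceMain_splitFirst
    push_cast
    linarith

end Broadcast

section TensorPower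

lemma posSemidef_of_finsetProd {ι n 𝕜 : Type*} [RCLike 𝕜] [Finite n] {M : ι → Matrix n n 𝕜}
    (s : Finset ι) (hM : ∀ i ∈ s, (M i).PosSemidef) :
    (of fun x y => ∏ i ∈ s, M i x y).PosSemidef := by
  classical
  induction s using Finset.induction_on with
  | empty =>
    simpa [vecMulVec, Pi.star_def] using posSemidef_vecMulVec_self_star (1 : n → 𝕜)
  | insert a s ha ih =>
    simp only [Finset.prod_insert ha]
    exact (hM a (Finset.mem_insert_self a s)).hadamard
      (ih fun i hi => hM i (Finset.mem_insert_of_mem hi))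

lemma sum_sum_prod_eq_prod_sum {ι A B R : Type*} [Fintype ι] [DecidableEq ι] [Fintype A]
    [Fintype B] [CommSemiring R] (F : ι → A × B → R) :
    ∑ f : ι → A, ∑ g : ι → B, ∏ i, F i (f i, g i) = ∏ i, ∑ z, F i z := by
  rw [Fintype.prod_sum, ← Fintype.sum_prod_type',
    ← (Equiv.arrowProdEquivProdArrow ι (fun _ => A) fun _ => B).sum_comp]
  rfl

variable {A B : Type} [Fintype A] [Fintype B] {ρ : Matrix (A × B) (A × B) ℂ}

lemma trace_tpow (ρ : Matrix (A × B) (A × B) ℂ) (n : ℕ) : (tpow ρ n).trace = ρ.trace ^ n := by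
  have sum_eq := sum_sum_prod_eq_prod_sum fun (_ : Fin n) z => ρ z z
  simpa [trace, tpow, Fintype.sum_prod_type] using sum_eq

protected lemma IsDensity.tpow (hρ : IsDensity ρ) (n : ℕ) : IsDensity (tpow ρ n) :=
  ⟨posSemidef_of_finsetProd Finset.univ fun i _ =>
      hρ.1.submatrix fun x : (Fin n → A) × (Fin n → B) => (x.1 i, x.2 i),
    by rw [trace_tpow, hρ.2, one_pow]⟩

variable [DecidableEq A] [DecidableEq B]

lemma copyMarginal_tpow (ρ : Matrix (A × B) (A × B) ℂ) (n : ℕ) (k : Fin n) :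
    copyMarginal (tpow ρ n) k = ρ.trace ^ (n - 1) • ρ := by
  ext x y
  let F (i : Fin n) (z : A × B) : ℂ := if i = k then (if z = x then ρ z y else 0) else ρ z z
  have summand_eq (f : Fin n → A) (g : Fin n → B) :
      (if f k = x.1 ∧ g k = x.2 then
        tpow ρ n (f, g) (Function.update f k y.1, Function.update g k y.2) else 0) =
      ∏ i, F i (f i, g i) := by
    simp only [F, tpow, of_apply]
    split_ifs with hc
    · refine Finset.prod_congr rfl fun i _ => ?_
      by_cases hi : i = k
      · subst hi
        simp [hc.1, hc.2]
      · simp [hi]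
    · refine (Finset.prod_eq_zero (Finset.mem_univ k) ?_).symm
      rw [if_pos rfl, if_neg fun h => hc (Prod.ext_iff.1 h)]
  have factor_eq (i : Fin n) : ∑ z, F i z = if i = k then ρ x y else ρ.trace := by
    simp only [F]
    split_ifs <;> simp [trace]
  simp only [copyMarginal, of_apply, summand_eq, sum_sum_prod_eq_prod_sum, factor_eq]
  simp [Finset.prod_ite, Finset.filter_eq', Finset.filter_ne', mul_comm]

lemma IsDensity.isBroadcast_tpow (hρ : IsDensity ρ) (n : ℕ) : IsBroadcast n (tpow ρ n) ρ :=
  ⟨hρ.tpow n, fun k => by rw [copyMarginal_tpow, hρ.2, one_pow, one_smul]⟩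

theorem IsDensity.two_mul_EI_le_Ib (hρ : IsDensity ρ) (n : ℕ) : 2 * n * EI ρ ≤ Ib n ρ := by
  refine le_csInf ⟨_, tpow ρ n, hρ.isBroadcast_tpow n, rfl⟩ ?_
  rintro _ ⟨τ, hτ, rfl⟩
  exact hτ.two_mul_EI_le_mutInfo

end TensorPower

/-- for every extension, I(AA':BB') ≥ 2E_I(ρ) + I(A':B');
consequently every n-copy broadcast state has I(A^n:B^n) ≥ 2n·E_I(ρ), and
hence I_b^{(∞)}(ρ) ≥ 2E_I(ρ). -/
theorem stmt_15 {A B : Type} [Fintype A] [Fintype B] [DecidableEq A] [DecidableEq B]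
    (ρ : Matrix (A × B) (A × B) ℂ) (hρ : IsDensity ρ) :
    (∀ (A' B' : Type) (_ : Fintype A') (_ : Fintype B')
        (_ : DecidableEq A') (_ : DecidableEq B')
        (τ : Matrix ((A × A') × (B × B')) ((A × A') × (B × B')) ℂ),
        IsDensity τ → ptracePrime τ = ρ →
        2 * EI ρ + mutInfo (ptraceMain τ) ≤ mutInfo τ) ∧
    (∀ (n : ℕ) (τ : Matrix ((Fin n → A) × (Fin n → B)) ((Fin n → A) × (Fin n → B)) ℂ),
        IsBroadcast n τ ρ → 2 * n * EI ρ ≤ mutInfo τ) ∧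
    (∀ L : ℝ, Tendsto (fun n : ℕ => Ib n ρ / n) atTop (nhds L) → 2 * EI ρ ≤ L) := by
  refine ⟨fun A' B' _ _ _ _ τ hτ hρτ => hρτ ▸ hτ.two_mul_EI_add_mutInfo_ptraceMain_le,
    fun n τ hτ => hτ.two_mul_EI_le_mutInfo, fun L hL => ge_of_tendsto hL ?_⟩
  filter_upwards [eventually_gt_atTop 0] with n hn
  rw [le_div_iff₀ (Nat.cast_pos.2 hn)]
  linarith [hρ.two_mul_EI_le_Ib n]

end
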